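/- Fix integers n ≥ 1 and 1 ≤ m₀ ≤ n. For each m₀ ≤ m ≤ n let F_m : {0,1}^m → {0,1}^m be a pairwise independent random function, with F_{m₀},…,F_n mutually independent, and define r := r^{m₀} by the downward recursion r^{n+1} = id and r^m(x) = r^{m+1}(F_m(MSB_m(x)) ‖ LSB_{n−m}(x)). Let k be a uniformly random key for a 4-wise independent family {h_k : {0,1}^n → {0,1}}, independent of (F_{m₀},…,F_n), let s(x) := h_k(r(x)), let X ⊆ {1,…,n} with 1 ≤ |X| = m ≤ n/2, let T be the random 2^m × 2^{n−m} matrix T_{ij} = (−1)^{s(i‖_X j)}, and set ρ := T·Tᵀ/2^n. Then with probability at least 1 − 5n·2^{−m/2}, the von Neumann entropy of ρ is at least m/4. -/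

import Mathlib

open scoped BigOperators Classical
open Matrix

/-- Probability of an event under a (finite, weighted) probability mass function. -/
noncomputable def pr {Ω : Type*} [Fintype Ω] (p : Ω → ℝ) (E : Ω → Prop) : ℝ :=
  ∑ ω, if E ω then p ω else 0

/-- Squared Frobenius (Hilbert–Schmidt) norm of a real matrix. -/
def frobSq {a b : Type*} [Fintype a] [Fintype b] (M : Matrix a b ℝ) : ℝ :=
  ∑ i, ∑ j, M i j ^ 2


/-- Von Neumann entropy (base 2) of a Hermitian matrix, defined via its eigenvalues;
junk value `0` if the matrix is not Hermitian. -/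
noncomputable def vnEntropy {𝕜 : Type*} [RCLike 𝕜] {d : Type*} [Fintype d] [DecidableEq d]
    (ρ : Matrix d d 𝕜) : ℝ :=
  if h : ρ.IsHermitian then -∑ i, h.eigenvalues i * Real.logb 2 (h.eigenvalues i) else 0

/-- The `m` most significant bits of an `n`-bit string (index `0` is most significant). -/
def msb {n : ℕ} (m : ℕ) (h : m ≤ n) (x : Fin n → Bool) : Fin m → Bool :=
  fun s => x ⟨s.1, lt_of_lt_of_le s.2 h⟩

/-- Replace the `m` most significant bits of `x` by `f m` applied to them,
keeping the `n - m` least significant bits: this is `f_m(MSB_m(x)) ‖ LSB_{n-m}(x)`. -/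
def rStep (n : ℕ) (f : ∀ m : ℕ, (Fin m → Bool) → (Fin m → Bool)) (m : ℕ) (h : m ≤ n)
    (x : Fin n → Bool) : Fin n → Bool :=
  fun t => if ht : (t : ℕ) < m then f m (msb m h x) ⟨t.1, ht⟩ else x t

/-- The downward recursion `r^{n+1} = id`, `r^m(x) = r^{m+1}(f_m(MSB_m(x)) ‖ LSB_{n-m}(x))`. -/
def rRec (n : ℕ) (f : ∀ m : ℕ, (Fin m → Bool) → (Fin m → Bool)) (m : ℕ)
    (x : Fin n → Bool) : Fin n → Bool :=
  if h : m ≤ n then rRec n f (m + 1) (rStep n f m h x) else x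
termination_by n + 1 - m
decreasing_by omega

/-- `i ‖_X j`: the `n`-bit string agreeing with `i` on the coordinates in `X`
and with `j` on the complementary coordinates. -/
def mergeCut {n : ℕ} (X : Finset (Fin n)) (i : {t : Fin n // t ∈ X} → Bool)
    (j : {t : Fin n // t ∉ X} → Bool) : Fin n → Bool :=
  fun t => if h : t ∈ X then i ⟨t, h⟩ else j ⟨t, h⟩

/-!
Since `ρ` is a density matrix, concavity of the logarithm bounds its entropy below by
`-log₂ tr ρ²`, and by Markov's inequality it is enough that the purity `tr ρ²` has mean at most
`5 n / 2 ^ |X|`. Expanded in the entries of `T`, the purity is an average, over the rectangles with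
corners `i ‖ j`, `i' ‖ j`, `i' ‖ j'`, `i ‖ j'`, of products of four signs. By 4-wise independence
such a product has conditional mean zero given `r`, unless `r` maps the corner `i ‖ j` to the same
string as another corner.

Collisions of `r` are rare on average. The step at level `M` changes only the `M` most significant
bits, so it can merge two strings only if they agree in the other bits, and then does so with
probability at most `2 ^ (-M)`. Any `x` has `2 ^ M` candidates `y` at level `M`, so each level
contributes at most `1` to the expected number of `y` that collide with `x`; together with `y = x`,
that number is at most `n + 2`.
-/

open MeasureTheory ProbabilityTheory

section Independence

theorem exists_measureReal_eq_pr {Ω : Type*} [Fintype Ω] [MeasurableSpace Ω]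
    [MeasurableSingletonClass Ω] {p : Ω → ℝ} (hp0 : ∀ ω, 0 ≤ p ω) (hp1 : ∑ ω, p ω = 1) :
    ∃ μ : Measure Ω, IsProbabilityMeasure μ ∧ ∀ E : Ω → Prop, pr p E = μ.real {ω | E ω} := by
  have hsum : ∑ ω, ENNReal.ofReal (p ω) = 1 := by
    rw [← ENNReal.ofReal_sum_of_nonneg fun ω _ => hp0 ω, hp1, ENNReal.ofReal_one]
  refine ⟨(PMF.ofFintype _ hsum).toMeasure, inferInstance, fun E => ?_⟩
  rw [measureReal_def, PMF.toMeasure_apply_fintype,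
    ENNReal.toReal_sum fun ω _ => by rw [Set.indicator_apply]; split_ifs <;> simp]
  refine Finset.sum_congr rfl fun ω _ => ?_
  by_cases hω : E ω <;> simp [hω, hp0]

variable {Ω : Type*} [MeasurableSpace Ω] {μ : Measure Ω}

theorem integral_ite_one_zero {E : Ω → Prop} [DecidablePred E] (hE : MeasurableSet {ω | E ω}) :
    ∫ ω, (if E ω then (1 : ℝ) else 0) ∂μ = μ.real {ω | E ω} := by
  rw [← integral_indicator_one hE]
  simp [Set.indicator_apply]

section DependsOn

variable {ι B C : Type*} {A : ι → Type*} [∀ i, Finite (A i)] [∀ i, MeasurableSpace (A i)]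
  [∀ i, MeasurableSingletonClass (A i)] [Nonempty B] [MeasurableSpace B] [Nonempty C]
  [MeasurableSpace C] {I : Finset ι} {F : ∀ i, Ω → A i}

theorem measurable_comp_of_dependsOn (hF : ∀ i ∈ I, Measurable (F i)) {f : (∀ i, A i) → B}
    (hf : DependsOn f I) : Measurable fun ω => f fun i => F i ω := by
  obtain ⟨g, rfl⟩ := dependsOn_iff_exists_comp.1 hf
  exact (Measurable.of_discrete (f := g)).comp (measurable_pi_lambda _ fun i => hF i i.2)

theorem indepFun_comp_of_dependsOn (hF : ∀ i ∈ I, Measurable (F i))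
    (hInd : iIndepFun (fun i : I => F i) μ) {s t : Set ι} (hs : s ⊆ I) (ht : t ⊆ I)
    (hst : Disjoint s t) {f : (∀ i, A i) → B} {g : (∀ i, A i) → C}
    (hf : DependsOn f s) (hg : DependsOn g t) :
    IndepFun (fun ω => f fun i => F i ω) (fun ω => g fun i => F i ω) μ := by
  obtain ⟨f, rfl⟩ := dependsOn_iff_exists_comp.1 hf
  obtain ⟨g, rfl⟩ := dependsOn_iff_exists_comp.1 hg
  let S : Finset I := {i | ↑i ∈ s}
  let T : Finset I := {i | ↑i ∈ t}
  have hST : Disjoint S T := Finset.disjoint_filter.2 fun i _ hi => hst.notMem_of_mem_left hi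
  exact (hInd.indepFun_finset S T hST fun i => hF i i.2).comp
    (φ := fun v : (∀ i : S, A i) => f fun i => v ⟨⟨i, hs i.2⟩, by simp [S]⟩)
    (ψ := fun v : (∀ i : T, A i) => g fun i => v ⟨⟨i, ht i.2⟩, by simp [T]⟩)
    .of_discrete .of_discrete

end DependsOn

variable [IsProbabilityMeasure μ]

theorem iIndepFun_and_indepFun_of_measureReal_eq_prod_mul {ι B : Type*} {A : ι → Type*}
    [∀ i, Countable (A i)] [∀ i, MeasurableSpace (A i)] [∀ i, MeasurableSingletonClass (A i)]
    [Countable B] [MeasurableSpace B] [MeasurableSingletonClass B]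
    {I : Finset ι} {F : ∀ i, Ω → A i} {H : Ω → B}
    (hF : ∀ i ∈ I, Measurable (F i)) (hH : Measurable H)
    (h : ∀ (g : ∀ i, A i) (b : B), μ.real {ω | (∀ i ∈ I, F i ω = g i) ∧ H ω = b}
      = (∏ i ∈ I, μ.real {ω | F i ω = g i}) * μ.real {ω | H ω = b}) :
    iIndepFun (fun i : I => F i) μ ∧ IndepFun (fun ω (i : I) => F i ω) H μ := by
  have hF' : ∀ i : I, Measurable (F i) := fun i => hF i i.2
  have hT : Measurable fun ω (i : I) => F i ω := measurable_pi_lambda _ hF'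
  have : ∀ i : I, IsProbabilityMeasure (μ.map (F i)) :=
    fun i => Measure.isProbabilityMeasure_map (hF' i).aemeasurable
  have : IsProbabilityMeasure (μ.map H) := Measure.isProbabilityMeasure_map hH.aemeasurable
  have joint_law : μ.map (fun ω => (fun i : I => F i ω, H ω))
      = (Measure.pi fun i : I => μ.map (F i)).prod (μ.map H) := by
    refine Measure.ext_of_measureReal_singleton fun ⟨g, b⟩ => ?_
    obtain ⟨ω₀⟩ := μ.nonempty_of_neZero
    have : ∀ i, Nonempty (A i) := fun i => ⟨F i ω₀⟩
    obtain ⟨g, rfl⟩ := Subtype.exists_pi_extension g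
    rw [map_measureReal_apply (hT.prodMk hH) (measurableSet_singleton _),
      ← Set.singleton_prod_singleton, measureReal_prod_prod, measureReal_def (Measure.pi _),
      Measure.pi_singleton, ENNReal.toReal_prod]
    simp only [← measureReal_def, map_measureReal_apply (hF' _) (measurableSet_singleton _),
      map_measureReal_apply hH (measurableSet_singleton _)]
    rw [Finset.prod_coe_sort I fun i => μ.real (F i ⁻¹' {g i})]
    refine Eq.trans ?_ (h g b)
    congr 1 with ω
    simp [funext_iff]
  have marginal : μ.map (fun ω (i : I) => F i ω) = Measure.pi fun i : I => μ.map (F i) := by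
    rw [← Measure.fst_map_prodMk hH, joint_law, Measure.fst_prod]
  refine ⟨(iIndepFun_iff_map_fun_eq_pi_map fun i => (hF' i).aemeasurable).2 marginal,
    (indepFun_iff_map_prod_eq_prod_map_map hT.aemeasurable hH.aemeasurable).2 ?_⟩
  rw [joint_law, marginal]

theorem iIndepFun_of_measureReal_eq_prod {ι : Type*} {A : ι → Type*}
    [∀ i, Countable (A i)] [∀ i, MeasurableSpace (A i)] [∀ i, MeasurableSingletonClass (A i)]
    {I : Finset ι} {F : ∀ i, Ω → A i} (hF : ∀ i ∈ I, Measurable (F i))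
    (h : ∀ g : ∀ i, A i, μ.real {ω | ∀ i ∈ I, F i ω = g i} = ∏ i ∈ I, μ.real {ω | F i ω = g i}) :
    iIndepFun (fun i : I => F i) μ :=
  (iIndepFun_and_indepFun_of_measureReal_eq_prod_mul (H := fun _ => ()) hF measurable_const
    fun g b => by simpa using h g).1

theorem integral_comp_le_of_indepFun {A B : Type*} [Finite A] [MeasurableSpace A]
    [MeasurableSingletonClass A] [Finite B] [MeasurableSpace B] [MeasurableSingletonClass B]
    {U : Ω → A} {V : Ω → B} (hU : Measurable U) (hV : Measurable V) (hUV : IndepFun U V μ)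
    {φ : A → B → ℝ} {ψ : Ω → ℝ} (hψ : Integrable ψ μ)
    (h : ∀ ω, ∫ ω', φ (U ω) (V ω') ∂μ ≤ ψ ω) :
    ∫ ω, φ (U ω) (V ω) ∂μ ≤ ∫ ω, ψ ω ∂μ := by
  have : IsProbabilityMeasure (μ.map U) := Measure.isProbabilityMeasure_map hU.aemeasurable
  have : IsProbabilityMeasure (μ.map V) := Measure.isProbabilityMeasure_map hV.aemeasurable
  calc ∫ ω, φ (U ω) (V ω) ∂μ
      = ∫ z, φ z.1 z.2 ∂(μ.map fun ω => (U ω, V ω)) :=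
        (integral_map (hU.prodMk hV).aemeasurable
          (Measurable.of_discrete (f := fun z : A × B => φ z.1 z.2)).aestronglyMeasurable).symm
    _ = ∫ a, ∫ b, φ a b ∂(μ.map V) ∂(μ.map U) := by
        rw [hUV.map_prod_eq_prod_map_map hU.aemeasurable hV.aemeasurable,
          integral_prod _ .of_finite]
    _ = ∫ ω, ∫ b, φ (U ω) b ∂(μ.map V) ∂μ :=
        integral_map hU.aemeasurable Measurable.of_discrete.aestronglyMeasurable
    _ ≤ ∫ ω, ψ ω ∂μ := by
        refine integral_mono (Integrable.comp_measurable
          (g := fun a => ∫ b, φ a b ∂(μ.map V)) .of_finite hU) hψ fun ω => ?_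
        have : AEStronglyMeasurable (φ (U ω)) (μ.map V) :=
          Measurable.of_discrete.aestronglyMeasurable
        simpa only [integral_map hV.aemeasurable this] using h ω

theorem measureReal_comp_eq_le_of_indepFun {A B C : Type*} [Finite A] [Finite B] [DecidableEq B]
    [MeasurableSpace B] [MeasurableSingletonClass B] [Finite C] [MeasurableSpace C]
    [MeasurableSingletonClass C] {U : Ω → A → B} {V : Ω → B → C} (hU : Measurable U)
    (hV : Measurable V) (hUV : IndepFun U V μ) {x y : A} {c : ℝ}
    (h : ∀ ω, μ.real {ω' | V ω' (U ω x) = V ω' (U ω y)} ≤ (if U ω x = U ω y then 1 else 0) + c) :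
    μ.real {ω | V ω (U ω x) = V ω (U ω y)} ≤ μ.real {ω | U ω x = U ω y} + c := by
  have hE : MeasurableSet {ω | U ω x = U ω y} :=
    hU (MeasurableSet.of_discrete (s := {u : A → B | u x = u y}))
  have hEV : MeasurableSet {ω | V ω (U ω x) = V ω (U ω y)} :=
    (hU.prodMk hV) (MeasurableSet.of_discrete
      (s := {z : (A → B) × (B → C) | z.2 (z.1 x) = z.2 (z.1 y)}))
  have hV' : ∀ u v : B, MeasurableSet {ω | V ω u = V ω v} := fun u v =>
    hV (MeasurableSet.of_discrete (s := {w : B → C | w u = w v}))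
  have hint : Integrable (fun ω => if U ω x = U ω y then (1 : ℝ) else 0) μ :=
    Integrable.comp_measurable (g := fun u : A → B => if u x = u y then (1 : ℝ) else 0)
      .of_finite hU
  calc μ.real {ω | V ω (U ω x) = V ω (U ω y)}
      = ∫ ω, (if V ω (U ω x) = V ω (U ω y) then (1 : ℝ) else 0) ∂μ :=
        (integral_ite_one_zero hEV).symm
    _ ≤ ∫ ω, ((if U ω x = U ω y then 1 else 0) + c) ∂μ :=
        integral_comp_le_of_indepFun hU hV hUV
          (φ := fun u v => if v (u x) = v (u y) then (1 : ℝ) else 0)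
          (hint.add (integrable_const c)) fun ω => (integral_ite_one_zero (hV' _ _)).trans_le (h ω)
    _ = μ.real {ω | U ω x = U ω y} + c := by
        rw [integral_add hint (integrable_const c), integral_ite_one_zero hE]
        simp

end Independence

section Collisions

variable {Ω : Type*} [MeasurableSpace Ω] {μ : Measure Ω}

/-- A random function is universal (in the sense of Carter and Wegman) if it sends any two distinct
points to the same value with probability at most `1 / |B|`, as a pairwise independent one does. -/
def IsUniversal {A B : Type*} [Fintype B] (F : Ω → A → B) (μ : Measure Ω) : Prop :=
  ∀ ⦃x y : A⦄, x ≠ y → μ.real {ω | F ω x = F ω y} ≤ 1 / Fintype.card B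

theorem isUniversal_of_pairwise_uniform {A B : Type*} [Fintype B] {F : Ω → A → B}
    (h : ∀ x y : A, x ≠ y → ∀ a b : B,
      μ.real {ω | F ω x = a ∧ F ω y = b} = (1 / Fintype.card B : ℝ) ^ 2) :
    IsUniversal F μ := by
  intro x y hxy
  calc μ.real {ω | F ω x = F ω y}
      = μ.real (⋃ b : B, {ω | F ω x = b ∧ F ω y = b}) := by
        congr 1 with ω
        simp [eq_comm]
    _ ≤ ∑ b : B, μ.real {ω | F ω x = b ∧ F ω y = b} := measureReal_iUnion_fintype_le _
    _ = 1 / Fintype.card B := by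
        simp only [h x y hxy, Finset.sum_const, Finset.card_univ, nsmul_eq_mul]
        rcases eq_or_ne (Fintype.card B : ℝ) 0 with h0 | h0
        · simp [h0]
        · field_simp

/-- Two bit strings agree from `M` on if they differ at most in their `M` most significant bits. -/
def AgreeFrom {n : ℕ} (M : ℕ) (x y : Fin n → Bool) : Prop :=
  ∀ t : Fin n, M ≤ (t : ℕ) → x t = y t

theorem AgreeFrom.eq_of_msb_eq {n M : ℕ} {x y : Fin n → Bool} (hxy : AgreeFrom M x y)
    (h : M ≤ n) (hmsb : msb M h x = msb M h y) : x = y := by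
  funext t
  rcases lt_or_ge (t : ℕ) M with ht | ht
  · exact congrFun hmsb ⟨t, ht⟩
  · exact hxy t ht

theorem card_agreeFrom_le {n M : ℕ} (h : M ≤ n) (x : Fin n → Bool) :
    ({y | AgreeFrom M x y} : Finset (Fin n → Bool)).card ≤ 2 ^ M := by
  have msb_injOn : Set.InjOn (msb M h) {y | AgreeFrom M x y} := fun y hy z hz hyz =>
    AgreeFrom.eq_of_msb_eq (fun t ht => (hy t ht).symm.trans (hz t ht)) h hyz
  calc ({y | AgreeFrom M x y} : Finset (Fin n → Bool)).card
      ≤ (Finset.univ : Finset (Fin M → Bool)).card :=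
        Finset.card_le_card_of_injOn _ (fun _ _ => Finset.mem_univ _) (by simpa using msb_injOn)
    _ = 2 ^ M := by simp

section RecursiveFunction

variable {n m : ℕ} {f : ∀ m : ℕ, (Fin m → Bool) → (Fin m → Bool)}

theorem rRec_eq_comp_rStep (h : m ≤ n) :
    rRec n f m = rRec n f (m + 1) ∘ rStep n f m h := by
  funext x
  rw [rRec, dif_pos h, Function.comp_apply]

theorem rRec_of_lt (h : n < m) : rRec n f m = id := by
  funext x
  rw [rRec, dif_neg h.not_ge, id]

theorem dependsOn_rStep (h : m ≤ n) : DependsOn (fun f => rStep n f m h) {m} := by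
  intro f g hfg
  have hm : f m = g m := hfg m rfl
  funext x t
  simp only [rStep, hm]

theorem dependsOn_rRec (n m : ℕ) : DependsOn (fun f => rRec n f m) (Set.Icc m n) := by
  intro f g hfg
  rcases lt_or_ge n m with h | h
  · simp only [rRec_of_lt h]
  · have step : rStep n f m h = rStep n g m h :=
      dependsOn_rStep h fun i hi => hfg i (by simp_all)
    have tail : rRec n f (m + 1) = rRec n g (m + 1) :=
      dependsOn_rRec n (m + 1) fun i hi => hfg i (Set.Icc_subset_Icc_left m.le_succ hi)
    simp only [rRec_eq_comp_rStep h, step, tail]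
termination_by n + 1 - m

theorem agreeFrom_rStep_iff (h : m ≤ n) {M : ℕ} (hM : m ≤ M) {x y : Fin n → Bool} :
    AgreeFrom M (rStep n f m h x) (rStep n f m h y) ↔ AgreeFrom M x y := by
  refine forall₂_congr fun t ht => ?_
  have : ¬ (t : ℕ) < m := by omega
  simp only [rStep, this, dite_false]

theorem apply_msb_eq_of_rStep_eq (h : m ≤ n) {x y : Fin n → Bool}
    (hxy : rStep n f m h x = rStep n f m h y) : f m (msb m h x) = f m (msb m h y) := by
  funext t
  simpa [rStep] using congrFun hxy ⟨t, t.2.trans_le h⟩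

end RecursiveFunction

/-- The probability that some step of the recursion from level `m` on merges `x` and `y`, as bounded
by a union bound: level `M` leaves the bits from `M` on alone, so it can only merge strings that
agree there, and does so with probability at most `2 ^ (-M)`. -/
noncomputable def mergeBound {n : ℕ} (m : ℕ) (x y : Fin n → Bool) : ℝ :=
  ∑ M ∈ Finset.Icc m n, (1 / 2 : ℝ) ^ M * if AgreeFrom M x y then 1 else 0

theorem mergeBound_nonneg {n : ℕ} (m : ℕ) (x y : Fin n → Bool) : 0 ≤ mergeBound m x y :=
  Finset.sum_nonneg fun _ _ => by positivity

theorem mergeBound_of_le {n m : ℕ} (h : m ≤ n) (x y : Fin n → Bool) :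
    mergeBound m x y
      = (1 / 2 : ℝ) ^ m * (if AgreeFrom m x y then 1 else 0) + mergeBound (m + 1) x y := by
  rw [mergeBound, ← Finset.insert_Icc_add_one_left_eq_Icc h, Finset.sum_insert (by simp),
    mergeBound]

theorem mergeBound_rStep {n m : ℕ} {f : ∀ m : ℕ, (Fin m → Bool) → (Fin m → Bool)} (h : m ≤ n)
    {k : ℕ} (hk : m ≤ k) (x y : Fin n → Bool) :
    mergeBound k (rStep n f m h x) (rStep n f m h y) = mergeBound k x y :=
  Finset.sum_congr rfl fun M hM => by
    rw [agreeFrom_rStep_iff h (hk.trans (Finset.mem_Icc.1 hM).1)]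

theorem sum_mergeBound_le {n : ℕ} (m : ℕ) (x : Fin n → Bool) :
    ∑ y, mergeBound m x y ≤ n + 1 := by
  have level_le : ∀ M ∈ Finset.Icc m n,
      ∑ y : Fin n → Bool, (1 / 2 : ℝ) ^ M * (if AgreeFrom M x y then 1 else 0) ≤ 1 := by
    intro M hM
    have hcard : (({y | AgreeFrom M x y} : Finset (Fin n → Bool)).card : ℝ) ≤ 2 ^ M :=
      mod_cast card_agreeFrom_le (Finset.mem_Icc.1 hM).2 x
    rw [← Finset.mul_sum, Finset.sum_boole]
    calc (1 / 2 : ℝ) ^ M * (({y | AgreeFrom M x y} : Finset (Fin n → Bool)).card : ℝ)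
        ≤ (1 / 2) ^ M * 2 ^ M := by gcongr
      _ = 1 := by rw [← mul_pow]; norm_num
  calc ∑ y, mergeBound m x y
      = ∑ M ∈ Finset.Icc m n,
          ∑ y : Fin n → Bool, (1 / 2 : ℝ) ^ M * (if AgreeFrom M x y then 1 else 0) :=
        Finset.sum_comm
    _ ≤ ∑ _M ∈ Finset.Icc m n, (1 : ℝ) := Finset.sum_le_sum level_le
    _ ≤ n + 1 := by
        rw [Finset.sum_const, nsmul_one, Nat.card_Icc]
        exact_mod_cast Nat.sub_le (n + 1) m

variable {F : ∀ m : ℕ, Ω → (Fin m → Bool) → (Fin m → Bool)}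

theorem measurable_rRec {n m : ℕ} (hFm : ∀ k ∈ Finset.Icc m n, Measurable (F k)) :
    Measurable fun ω => rRec n (F · ω) m :=
  measurable_comp_of_dependsOn hFm (by simpa using dependsOn_rRec n m)

theorem indepFun_rRec {B : Type*} [MeasurableSpace B] {H : Ω → B} {n m : ℕ}
    (hFH : IndepFun (fun ω (k : Finset.Icc m n) => F k ω) H μ) :
    IndepFun (fun ω => rRec n (F · ω) m) H μ := by
  have hdep : DependsOn (fun f => rRec n f m) (Finset.Icc m n) := by
    simpa using dependsOn_rRec n m
  obtain ⟨g, hg⟩ := dependsOn_iff_exists_comp.1 hdep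
  have factor : (fun ω => rRec n (F · ω) m) = g ∘ fun ω (k : Finset.Icc m n) => F k ω :=
    funext fun ω => congrFun hg (F · ω)
  rw [factor]
  exact hFH.comp (φ := g) (ψ := id) .of_discrete measurable_id

theorem indepFun_rStep_rRec {n m : ℕ} (hmn : m ≤ n)
    (hFm : ∀ k ∈ Finset.Icc m n, Measurable (F k))
    (hF : iIndepFun (fun k : Finset.Icc m n => F k) μ) :
    IndepFun (fun ω => rStep n (F · ω) m hmn) (fun ω => rRec n (F · ω) (m + 1)) μ :=
  indepFun_comp_of_dependsOn hFm hF (by simpa) (by simpa using Set.Icc_subset_Icc_left m.le_succ)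
    (by simp) (dependsOn_rStep hmn) (dependsOn_rRec n (m + 1))

variable [IsProbabilityMeasure μ]

theorem measureReal_rStep_eq_le {n m : ℕ} (hmn : m ≤ n) (hu : IsUniversal (F m) μ)
    (x y : Fin n → Bool) :
    μ.real {ω | rStep n (F · ω) m hmn x = rStep n (F · ω) m hmn y}
      ≤ (if x = y then 1 else 0) + (1 / 2 : ℝ) ^ m * (if AgreeFrom m x y then 1 else 0) := by
  rcases eq_or_ne x y with rfl | hxy
  · simp only [if_true, Set.ofPred_true, probReal_univ]
    exact le_add_of_nonneg_right (by positivity)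
  have merged_agree : ∀ ω, rStep n (F · ω) m hmn x = rStep n (F · ω) m hmn y →
      AgreeFrom m x y := fun ω h =>
    (agreeFrom_rStep_iff hmn le_rfl).1 fun t _ => congrFun h t
  by_cases ha : AgreeFrom m x y
  · have hmsb : msb m hmn x ≠ msb m hmn y := fun h => hxy (ha.eq_of_msb_eq hmn h)
    calc μ.real {ω | rStep n (F · ω) m hmn x = rStep n (F · ω) m hmn y}
        ≤ μ.real {ω | F m ω (msb m hmn x) = F m ω (msb m hmn y)} :=
          measureReal_mono fun ω h => apply_msb_eq_of_rStep_eq hmn h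
      _ ≤ 1 / Fintype.card (Fin m → Bool) := hu hmsb
      _ = _ := by simp [hxy, ha]
  · have : {ω | rStep n (F · ω) m hmn x = rStep n (F · ω) m hmn y} = ∅ :=
      Set.eq_empty_of_forall_notMem fun ω h => ha (merged_agree ω h)
    simp [this, hxy, ha]

theorem measureReal_rRec_eq_le {n m : ℕ} (hFm : ∀ k ∈ Finset.Icc m n, Measurable (F k))
    (hu : ∀ k ∈ Finset.Icc m n, IsUniversal (F k) μ)
    (hF : iIndepFun (fun k : Finset.Icc m n => F k) μ) (x y : Fin n → Bool) :
    μ.real {ω | rRec n (F · ω) m x = rRec n (F · ω) m y}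
      ≤ (if x = y then 1 else 0) + mergeBound m x y := by
  rcases lt_or_ge n m with hmn | hmn
  · simp only [rRec_of_lt hmn, id]
    refine le_add_of_le_of_nonneg ?_ (mergeBound_nonneg _ _ _)
    split_ifs with hxy <;> simp [hxy]
  have hsub : Finset.Icc (m + 1) n ⊆ Finset.Icc m n := Finset.Icc_subset_Icc_left m.le_succ
  have hm : m ∈ Finset.Icc m n := Finset.left_mem_Icc.2 hmn
  have ih := measureReal_rRec_eq_le (fun k hk => hFm k (hsub hk)) (fun k hk => hu k (hsub hk))
    (hF.precomp (Set.inclusion_injective hsub))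
  let U : Ω → (Fin n → Bool) → (Fin n → Bool) := fun ω => rStep n (F · ω) m hmn
  let V : Ω → (Fin n → Bool) → (Fin n → Bool) := fun ω => rRec n (F · ω) (m + 1)
  have hU : Measurable U := measurable_comp_of_dependsOn hFm ((dependsOn_rStep hmn).mono (by simpa))
  have hV : Measurable V := measurable_rRec fun k hk => hFm k (hsub hk)
  calc μ.real {ω | rRec n (F · ω) m x = rRec n (F · ω) m y}
      = μ.real {ω | V ω (U ω x) = V ω (U ω y)} := by simp only [rRec_eq_comp_rStep hmn]; rfl
    _ ≤ μ.real {ω | U ω x = U ω y} + mergeBound (m + 1) x y := by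
        refine measureReal_comp_eq_le_of_indepFun hU hV (indepFun_rStep_rRec hmn hFm hF) fun ω => ?_
        simpa only [U, mergeBound_rStep hmn m.le_succ] using ih (U ω x) (U ω y)
    _ ≤ (if x = y then 1 else 0) + mergeBound m x y := by
        rw [mergeBound_of_le hmn, ← add_assoc]
        gcongr
        exact measureReal_rStep_eq_le hmn (hu m hm) x y
termination_by n + 1 - m

theorem sum_measureReal_rRec_eq_le {n m : ℕ} (hFm : ∀ k ∈ Finset.Icc m n, Measurable (F k))
    (hu : ∀ k ∈ Finset.Icc m n, IsUniversal (F k) μ)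
    (hF : iIndepFun (fun k : Finset.Icc m n => F k) μ) (x : Fin n → Bool) :
    ∑ y, μ.real {ω | rRec n (F · ω) m x = rRec n (F · ω) m y} ≤ n + 2 :=
  calc ∑ y, μ.real {ω | rRec n (F · ω) m x = rRec n (F · ω) m y}
      ≤ ∑ y, ((if x = y then 1 else 0) + mergeBound m x y) :=
        Finset.sum_le_sum fun y _ => measureReal_rRec_eq_le hFm hu hF x y
    _ ≤ n + 2 := by
        rw [Finset.sum_add_distrib, Finset.sum_ite_eq Finset.univ x, if_pos (Finset.mem_univ x)]
        linarith [sum_mergeBound_le m x]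

end Collisions

section Signs

/-- The sign `(-1) ^ b` of a bit `b`. -/
def bitSign (b : Bool) : ℝ := if b then -1 else 1

theorem bitSign_mul_self (b : Bool) : bitSign b * bitSign b = 1 := by
  cases b <;> simp [bitSign]

variable {Ω A : Type*} [MeasurableSpace Ω] {μ : Measure Ω}

/-- A random function to bits is `k`-wise uniform if its values at any at most `k` distinct
points are independent and uniform: this is `k`-wise independence of the hash family `ω ↦ H ω`. -/
def IsKWiseUniform (k : ℕ) (H : Ω → A → Bool) (μ : Measure Ω) : Prop :=
  ∀ (s : Finset A) (b : A → Bool), s.card ≤ k →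
    μ.real {ω | ∀ u ∈ s, H ω u = b u} = (1 / 2 : ℝ) ^ s.card

variable {k : ℕ} {H : Ω → A → Bool}

theorem IsKWiseUniform.measureReal_eq (hH : IsKWiseUniform k H μ) (hk : 1 ≤ k) (a : A)
    (v : Bool) : μ.real {ω | H ω a = v} = 1 / 2 := by
  simpa using hH {a} (fun _ => v) (by simpa)

variable [IsProbabilityMeasure μ]

theorem IsKWiseUniform.iIndepFun (hH : IsKWiseUniform k H μ) (hHm : Measurable H)
    {s : Finset A} (hs : s.card ≤ k) : iIndepFun (fun (u : s) ω => H ω u) μ := by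
  refine iIndepFun_of_measureReal_eq_prod (F := fun u ω => H ω u) (by fun_prop) fun b => ?_
  rw [hH s b hs, ← Finset.prod_const]
  refine Finset.prod_congr rfl fun u hu => (hH.measureReal_eq ?_ u _).symm
  exact (Finset.card_pos.2 ⟨u, hu⟩).trans_le hs

theorem IsKWiseUniform.integral_bitSign (hH : IsKWiseUniform k H μ) (hHm : Measurable H)
    (hk : 1 ≤ k) (a : A) : ∫ ω, bitSign (H ω a) ∂μ = 0 := by
  have hE : MeasurableSet {ω | H ω a = true} := measurableSet_eq_fun (by fun_prop) (by fun_prop)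
  have hsign : ∀ ω, bitSign (H ω a) = 1 - 2 * {ω | H ω a = true}.indicator (fun _ => 1) ω := by
    intro ω
    cases h : H ω a <;> norm_num [bitSign, h]
  simp only [hsign]
  rw [integral_sub (integrable_const _) (((integrable_const _).indicator hE).const_mul 2),
    integral_const_mul, integral_indicator_const _ hE, hH.measureReal_eq hk]
  simp

theorem IsKWiseUniform.integral_bitSign_mul (hH : IsKWiseUniform k H μ) (hHm : Measurable H)
    {a : A} {s : Finset A} (ha : a ∉ s) (hs : s.card + 1 ≤ k) {g : (A → Bool) → ℝ}
    (hg : DependsOn g s) : ∫ ω, bitSign (H ω a) * g (H ω) ∂μ = 0 := by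
  have hm : ∀ u ∈ insert a s, Measurable fun ω => H ω u := by fun_prop
  have hInd := hH.iIndepFun hHm (s := insert a s) (by rwa [Finset.card_insert_of_notMem ha])
  have ha_s : IndepFun (fun ω => bitSign (H ω a)) (fun ω => g (H ω)) μ :=
    indepFun_comp_of_dependsOn (F := fun u ω => H ω u) (f := fun h => bitSign (h a)) hm hInd
      (s := {a}) (t := s) (by simp) (by simp) (by simpa)
      (fun h h' hh' => congrArg bitSign (hh' a rfl)) hg
  have hg_meas : Measurable fun ω => g (H ω) :=
    measurable_comp_of_dependsOn (F := fun u ω => H ω u) hm (hg.mono (by simp))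
  have ha_meas : Measurable fun ω => bitSign (H ω a) :=
    (Measurable.of_discrete (f := bitSign)).comp (hm a (by simp))
  rw [ha_s.integral_fun_mul_eq_mul_integral ha_meas.aestronglyMeasurable
    hg_meas.aestronglyMeasurable, hH.integral_bitSign hHm (by omega), zero_mul]

theorem IsKWiseUniform.integral_bitSign_mul_four_le [DecidableEq A] (hH : IsKWiseUniform 4 H μ)
    (hHm : Measurable H) (a b c d : A) :
    ∫ ω, bitSign (H ω a) * (bitSign (H ω b) * bitSign (H ω c) * bitSign (H ω d)) ∂μ
      ≤ (if a = b then 1 else 0) + (if a = c then 1 else 0) + (if a = d then 1 else 0) := by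
  by_cases ha : a ∈ ({b, c, d} : Finset A)
  · have abs_le_one : ∀ a b c d, |bitSign a * (bitSign b * bitSign c * bitSign d)| ≤ 1 := by
      simp [bitSign]
    calc ∫ ω, bitSign (H ω a) * (bitSign (H ω b) * bitSign (H ω c) * bitSign (H ω d)) ∂μ
        ≤ 1 * μ.real Set.univ :=
          (Real.le_norm_self _).trans <|
            norm_integral_le_of_norm_le_const (.of_forall fun ω => abs_le_one _ _ _ _)
      _ = 1 := by simp
      _ ≤ _ := by
        simp only [Finset.mem_insert, Finset.mem_singleton] at ha
        split_ifs <;> simp_all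
  · have card_le : ({b, c, d} : Finset A).card + 1 ≤ 4 := Nat.succ_le_succ Finset.card_le_three
    refine (hH.integral_bitSign_mul hHm ha card_le
      (g := fun h => bitSign (h b) * bitSign (h c) * bitSign (h d)) fun h h' hh' => ?_).trans_le
      (by positivity)
    simp only [hh' b (by simp), hh' c (by simp), hh' d (by simp)]

end Signs

section Entropy

open scoped ComplexOrder

variable {𝕜 d : Type*} [RCLike 𝕜] [Fintype d]

/-- The purity `tr ρ²` of a density matrix `ρ`. -/
def purity (ρ : Matrix d d 𝕜) : ℝ := RCLike.re (ρ * ρ).trace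

variable {ρ : Matrix d d 𝕜}

theorem purity_eq_sum_eigenvalues_sq [DecidableEq d] (h : ρ.IsHermitian) :
    purity ρ = ∑ i, h.eigenvalues i ^ 2 := by
  rw [purity]
  conv_lhs => rw [h.spectral_theorem, ← map_mul, Unitary.conjStarAlgAut_apply, trace_mul_cycle,
    Unitary.coe_star_mul_self, one_mul, diagonal_mul_diagonal, trace_diagonal]
  simp [sq]

theorem purity_pos (hρ : ρ.IsHermitian) (htr : ρ.trace ≠ 0) : 0 < purity ρ := by
  rw [hρ.trace_eq_sum_eigenvalues] at htr
  obtain ⟨i, hi, h0⟩ := Finset.exists_ne_zero_of_sum_ne_zero htr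
  rw [purity_eq_sum_eigenvalues_sq hρ]
  exact Finset.sum_pos' (fun _ _ => sq_nonneg _)
    ⟨i, hi, sq_pos_of_ne_zero (by exact_mod_cast h0)⟩

theorem sum_mul_log_le_log_sum_sq {ι : Type*} (s : Finset ι) {w : ι → ℝ}
    (hw : ∀ i ∈ s, 0 ≤ w i) (hw1 : ∑ i ∈ s, w i = 1) :
    ∑ i ∈ s, w i * Real.log (w i) ≤ Real.log (∑ i ∈ s, w i ^ 2) := by
  have rpow_pos : ∀ i ∈ s, 0 < w i ^ w i := fun i hi => by
    rcases (hw i hi).eq_or_lt with h0 | h0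
    · simp [← h0]
    · positivity
  calc ∑ i ∈ s, w i * Real.log (w i) = Real.log (∏ i ∈ s, w i ^ w i) := by
        rw [Real.log_prod fun i hi => (rpow_pos i hi).ne']
        refine Finset.sum_congr rfl fun i hi => ?_
        rcases (hw i hi).eq_or_lt with h0 | h0
        · simp [← h0]
        · rw [Real.log_rpow h0]
    _ ≤ Real.log (∑ i ∈ s, w i * w i) :=
        Real.log_le_log (Finset.prod_pos rpow_pos)
          (Real.geom_mean_le_arith_mean_weighted s w w hw hw1 hw)
    _ = Real.log (∑ i ∈ s, w i ^ 2) := by simp only [sq]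

variable [DecidableEq d]

theorem neg_logb_purity_le_vnEntropy (hρ : ρ.PosSemidef) (htr : ρ.trace = 1) :
    -Real.logb 2 (purity ρ) ≤ vnEntropy ρ := by
  have hH := hρ.isHermitian
  have sum_eigenvalues : ∑ i, hH.eigenvalues i = 1 := by
    exact_mod_cast (hH.trace_eq_sum_eigenvalues (𝕜 := 𝕜)).symm.trans htr
  rw [vnEntropy, dif_pos hH, neg_le_neg_iff, purity_eq_sum_eigenvalues_sq hH]
  simp only [Real.logb, ← mul_div_assoc, ← Finset.sum_div]
  gcongr
  exact sum_mul_log_le_log_sum_sq _ (fun i _ => hρ.eigenvalues_nonneg i) sum_eigenvalues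

theorem le_vnEntropy_of_purity_le (hρ : ρ.PosSemidef) (htr : ρ.trace = 1) {t : ℝ}
    (h : purity ρ ≤ 2 ^ (-t)) : t ≤ vnEntropy ρ := by
  refine le_trans ?_ (neg_logb_purity_le_vnEntropy hρ htr)
  have hpos : 0 < purity ρ := purity_pos hρ.isHermitian (htr ▸ one_ne_zero)
  rwa [le_neg, Real.logb_le_iff_le_rpow one_lt_two hpos]

end Entropy

section Cut

variable {n : ℕ} (X : Finset (Fin n)) (s : (Fin n → Bool) → Bool)

theorem sum_sum_mergeCut {M : Type*} [AddCommMonoid M] (g : (Fin n → Bool) → M) :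
    ∑ i, ∑ j, g (mergeCut X i j) = ∑ x, g x := by
  rw [← Fintype.sum_prod_type' fun i j => g (mergeCut X i j)]
  exact (Equiv.piEquivPiSubtypeProd (· ∈ X) fun _ => Bool).symm.sum_comp g

theorem sum_cross_mergeCut_le {κ : (Fin n → Bool) → ℝ} (hκ : ∀ x, 0 ≤ κ x)
    (i : {t : Fin n // t ∈ X} → Bool) (j : {t : Fin n // t ∉ X} → Bool) :
    ∑ i', ∑ j', (κ (mergeCut X i' j) + κ (mergeCut X i' j') + κ (mergeCut X i j'))
      ≤ (2 ^ (n - X.card) + 1 + 2 ^ X.card) * ∑ x, κ x := by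
  have column_le : ∑ i', κ (mergeCut X i' j) ≤ ∑ x, κ x := by
    rw [← sum_sum_mergeCut X κ]
    exact Finset.sum_le_sum fun i' _ => Finset.single_le_sum
      (f := fun j' => κ (mergeCut X i' j')) (fun _ _ => hκ _) (Finset.mem_univ j)
  have row_le : ∑ j', κ (mergeCut X i j') ≤ ∑ x, κ x := by
    rw [← sum_sum_mergeCut X κ]
    exact Finset.single_le_sum (f := fun i' => ∑ j', κ (mergeCut X i' j'))
      (fun _ _ => Finset.sum_nonneg fun _ _ => hκ _) (Finset.mem_univ i)
  have card_row : Fintype.card ({t // t ∈ X} → Bool) = 2 ^ X.card := by simp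
  have card_column : Fintype.card ({t // t ∉ X} → Bool) = 2 ^ (n - X.card) := by
    simp [Fintype.card_subtype_compl]
  calc ∑ i', ∑ j', (κ (mergeCut X i' j) + κ (mergeCut X i' j') + κ (mergeCut X i j'))
      = 2 ^ (n - X.card) * ∑ i', κ (mergeCut X i' j) + ∑ x, κ x
          + 2 ^ X.card * ∑ j', κ (mergeCut X i j') := by
        simp only [Finset.sum_add_distrib, sum_sum_mergeCut, Finset.sum_const, Finset.card_univ,
          nsmul_eq_mul, ← Finset.mul_sum, card_row, card_column, Nat.cast_pow, Nat.cast_ofNat]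
    _ ≤ 2 ^ (n - X.card) * ∑ x, κ x + ∑ x, κ x + 2 ^ X.card * ∑ x, κ x := by gcongr
    _ = (2 ^ (n - X.card) + 1 + 2 ^ X.card) * ∑ x, κ x := by ring

/-- The matrix `T i j = (-1) ^ s(i ‖_X j)` of the signs of `s` across the cut `X`. -/
def cutMatrix : Matrix ({t : Fin n // t ∈ X} → Bool) ({t : Fin n // t ∉ X} → Bool) ℝ :=
  fun i j => bitSign (s (mergeCut X i j))

/-- The reduced density matrix on `X` of the `n`-qubit phase state with signs `s`, which is
`T * Tᵀ / 2 ^ n` for `T = cutMatrix X s`. -/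
noncomputable def cutState :
    Matrix ({t : Fin n // t ∈ X} → Bool) ({t : Fin n // t ∈ X} → Bool) ℝ :=
  ((1 : ℝ) / 2 ^ n) • (cutMatrix X s * (cutMatrix X s)ᵀ)

theorem posSemidef_cutState : (cutState X s).PosSemidef := by
  rw [cutState, ← conjTranspose_eq_transpose_of_trivial]
  exact (posSemidef_self_mul_conjTranspose _).smul (by positivity)

theorem trace_cutState : (cutState X s).trace = 1 := by
  have trace_gram : (cutMatrix X s * (cutMatrix X s)ᵀ).trace = 2 ^ n := by
    simp only [trace, diag, mul_apply, transpose_apply, cutMatrix, bitSign_mul_self]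
    rw [sum_sum_mergeCut X fun _ => (1 : ℝ)]
    simp
  rw [cutState, trace_smul, trace_gram, smul_eq_mul, one_div_mul_cancel (by positivity)]

theorem trace_mul_transpose_mul_mul_transpose {a b R : Type*} [Fintype a] [Fintype b]
    [CommSemiring R] (A : Matrix a b R) : ((A * Aᵀ) * (A * Aᵀ)).trace
      = ∑ i, ∑ j, ∑ i', ∑ j', A i j * (A i' j * A i' j' * A i j') := by
  simp only [trace, diag, mul_apply, transpose_apply, Finset.sum_mul_sum]
  refine Finset.sum_congr rfl fun i _ => Finset.sum_comm.trans <|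
    Finset.sum_congr rfl fun j _ => Finset.sum_congr rfl fun i' _ =>
      Finset.sum_congr rfl fun j' _ => by ring

theorem purity_cutState :
    purity (cutState X s) = (1 / 2 ^ n) ^ 2 * ∑ i, ∑ j, ∑ i', ∑ j',
      bitSign (s (mergeCut X i j)) * (bitSign (s (mergeCut X i' j)) *
        bitSign (s (mergeCut X i' j')) * bitSign (s (mergeCut X i j'))) := by
  rw [purity, cutState, smul_mul_smul_comm, trace_smul, trace_mul_transpose_mul_mul_transpose, ← sq]
  rfl

end Cut

section RandomCut

variable {Ω A B : Type*} [MeasurableSpace Ω] {μ : Measure Ω} [IsProbabilityMeasure μ]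
  [Finite B] [MeasurableSpace B] [MeasurableSingletonClass B] {H : Ω → B → Bool}

theorem integral_bitSign_comp_mul_four_le [Finite A] {R : Ω → A → B} (hR : Measurable R)
    (hHm : Measurable H) (hRH : IndepFun R H μ) (hH : IsKWiseUniform 4 H μ) (x y z w : A) :
    ∫ ω, bitSign (H ω (R ω x)) *
        (bitSign (H ω (R ω y)) * bitSign (H ω (R ω z)) * bitSign (H ω (R ω w))) ∂μ
      ≤ μ.real {ω | R ω x = R ω y} + μ.real {ω | R ω x = R ω z} + μ.real {ω | R ω x = R ω w} := by
  have hint : ∀ y, Integrable (fun ω => if R ω x = R ω y then (1 : ℝ) else 0) μ := fun y =>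
    Integrable.comp_measurable (g := fun u : A → B => if u x = u y then (1 : ℝ) else 0)
      .of_finite hR
  have hE : ∀ y, MeasurableSet {ω | R ω x = R ω y} := fun y =>
    hR (MeasurableSet.of_discrete (s := {u : A → B | u x = u y}))
  calc ∫ ω, bitSign (H ω (R ω x)) *
        (bitSign (H ω (R ω y)) * bitSign (H ω (R ω z)) * bitSign (H ω (R ω w))) ∂μ
      ≤ ∫ ω, ((if R ω x = R ω y then 1 else 0) + (if R ω x = R ω z then 1 else 0)
          + (if R ω x = R ω w then 1 else 0)) ∂μ :=
        integral_comp_le_of_indepFun hR hHm hRH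
          (φ := fun r h => bitSign (h (r x)) *
            (bitSign (h (r y)) * bitSign (h (r z)) * bitSign (h (r w))))
          (((hint y).add (hint z)).add (hint w))
          fun ω => hH.integral_bitSign_mul_four_le hHm _ _ _ _
    _ = μ.real {ω | R ω x = R ω y} + μ.real {ω | R ω x = R ω z} + μ.real {ω | R ω x = R ω w} := by
        rw [integral_add (by exact (hint y).add (hint z)) (hint w), integral_add (hint y) (hint z),
          integral_ite_one_zero (hE y), integral_ite_one_zero (hE z), integral_ite_one_zero (hE w)]

theorem measurable_apply_comp [Finite A] {R : Ω → A → B} (hR : Measurable R)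
    (hHm : Measurable H) : Measurable fun ω x => H ω (R ω x) :=
  (Measurable.of_discrete (f := fun (z : (A → B) × (B → Bool)) x => z.2 (z.1 x))).comp
    (hR.prodMk hHm)

variable {n : ℕ} {R : Ω → (Fin n → Bool) → B}

theorem integral_purity_cutState (X : Finset (Fin n)) {s : Ω → (Fin n → Bool) → Bool}
    (hs : Measurable s) :
    ∫ ω, purity (cutState X (s ω)) ∂μ
      = (1 / 2 ^ n) ^ 2 * ∑ i, ∑ j, ∑ i', ∑ j', ∫ ω, bitSign (s ω (mergeCut X i j)) *
          (bitSign (s ω (mergeCut X i' j)) * bitSign (s ω (mergeCut X i' j')) *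
            bitSign (s ω (mergeCut X i j'))) ∂μ := by
  have : IsProbabilityMeasure (μ.map s) := Measure.isProbabilityMeasure_map hs.aemeasurable
  have integral_law (φ : ((Fin n → Bool) → Bool) → ℝ) :
      ∫ u, φ u ∂(μ.map s) = ∫ ω, φ (s ω) ∂μ :=
    integral_map hs.aemeasurable Measurable.of_discrete.aestronglyMeasurable
  rw [← integral_law fun u => purity (cutState X u)]
  simp only [purity_cutState, integral_const_mul,
    integral_finsetSum _ fun _ _ => Integrable.of_finite]
  simp only [integral_law]

theorem sum_integral_bitSign_comp_mergeCut_le (hR : Measurable R) (hHm : Measurable H)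
    (hRH : IndepFun R H μ) (hH : IsKWiseUniform 4 H μ) {C : ℝ}
    (hC : ∀ x, ∑ y, μ.real {ω | R ω x = R ω y} ≤ C) (X : Finset (Fin n))
    (i : {t : Fin n // t ∈ X} → Bool) (j : {t : Fin n // t ∉ X} → Bool) :
    ∑ i', ∑ j', ∫ ω, bitSign (H ω (R ω (mergeCut X i j))) *
        (bitSign (H ω (R ω (mergeCut X i' j))) * bitSign (H ω (R ω (mergeCut X i' j'))) *
          bitSign (H ω (R ω (mergeCut X i j')))) ∂μ
      ≤ (2 ^ (n - X.card) + 1 + 2 ^ X.card) * C := by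
  let κ : (Fin n → Bool) → ℝ := fun y => μ.real {ω | R ω (mergeCut X i j) = R ω y}
  calc _ ≤ ∑ i', ∑ j', (κ (mergeCut X i' j) + κ (mergeCut X i' j') + κ (mergeCut X i j')) :=
        Finset.sum_le_sum fun _ _ => Finset.sum_le_sum fun _ _ =>
          integral_bitSign_comp_mul_four_le hR hHm hRH hH _ _ _ _
    _ ≤ (2 ^ (n - X.card) + 1 + 2 ^ X.card) * ∑ y, κ y :=
        sum_cross_mergeCut_le X (κ := κ) (fun _ => measureReal_nonneg) i j
    _ ≤ (2 ^ (n - X.card) + 1 + 2 ^ X.card) * C := by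
        gcongr
        exact hC _

theorem integral_purity_cutState_le (hR : Measurable R) (hHm : Measurable H)
    (hRH : IndepFun R H μ) (hH : IsKWiseUniform 4 H μ) {C : ℝ}
    (hC : ∀ x, ∑ y, μ.real {ω | R ω x = R ω y} ≤ C) (X : Finset (Fin n)) :
    ∫ ω, purity (cutState X fun x => H ω (R ω x)) ∂μ
      ≤ (2 ^ (n - X.card) + 1 + 2 ^ X.card) * C / 2 ^ n := by
  have card_bitString : (Fintype.card (Fin n → Bool) : ℝ) = 2 ^ n := by simp
  rw [integral_purity_cutState X (measurable_apply_comp hR hHm)]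
  calc _ ≤ (1 / 2 ^ n) ^ 2 * ∑ _x : Fin n → Bool, (2 ^ (n - X.card) + 1 + 2 ^ X.card) * C := by
        rw [← sum_sum_mergeCut X]
        gcongr with i _ j _
        exact sum_integral_bitSign_comp_mergeCut_le hR hHm hRH hH hC X i j
    _ = (2 ^ (n - X.card) + 1 + 2 ^ X.card) * C / 2 ^ n := by
        rw [Finset.sum_const, Finset.card_univ, nsmul_eq_mul, card_bitString]
        field_simp

theorem one_sub_div_le_measureReal_le {f : Ω → ℝ} (hf0 : ∀ ω, 0 ≤ f ω) (hf : Integrable f μ)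
    {ε : ℝ} (hε : 0 < ε) : 1 - (∫ ω, f ω ∂μ) / ε ≤ μ.real {ω | f ω ≤ ε} := by
  have markov : μ.real {ω | ε ≤ f ω} ≤ (∫ ω, f ω ∂μ) / ε :=
    (le_div_iff₀' hε).2 (mul_meas_ge_le_integral_of_nonneg (.of_forall hf0) hf ε)
  have cover : 1 ≤ μ.real {ω | f ω ≤ ε} + μ.real {ω | ε ≤ f ω} := by
    rw [← probReal_univ (μ := μ), ← Set.eq_univ_of_forall fun ω => le_total (f ω) ε]
    exact measureReal_union_le _ _
  linarith

end RandomCut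

theorem two_pow_sub_add_two_pow_mul_div_le {n m : ℕ} (hm : 1 ≤ m) (hmn : 2 * m ≤ n) :
    (2 ^ (n - m) + 1 + 2 ^ m : ℝ) * (n + 2) / 2 ^ n ≤ 5 * n / 2 ^ m := by
  have split : (2 : ℝ) ^ n = 2 ^ m * 2 ^ (n - m) := by rw [← pow_add]; congr 1; omega
  have hle : (2 : ℝ) ^ m ≤ 2 ^ (n - m) := pow_le_pow_right₀ one_le_two (by omega)
  have h2 : (2 : ℝ) ≤ 2 ^ (n - m) := le_self_pow₀ one_le_two (by omega)
  have hn : (2 : ℝ) ≤ n := by exact_mod_cast (by omega : 2 ≤ n)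
  calc (2 ^ (n - m) + 1 + 2 ^ m : ℝ) * (n + 2) / 2 ^ n
      ≤ (2 ^ (n - m) + 2 ^ (n - m) / 2 + 2 ^ (n - m)) * (n + n) / 2 ^ n := by gcongr; linarith
    _ = 5 * n / 2 ^ m := by
        rw [split]
        field_simp
        norm_num

theorem statement2_general {Ω : Type*} [MeasurableSpace Ω] {μ : Measure Ω}
    [IsProbabilityMeasure μ] {n m₀ : ℕ} {F : ∀ m : ℕ, Ω → (Fin m → Bool) → (Fin m → Bool)}
    {H : Ω → (Fin n → Bool) → Bool} (hFm : ∀ m ∈ Finset.Icc m₀ n, Measurable (F m))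
    (hHm : Measurable H) (hu : ∀ m ∈ Finset.Icc m₀ n, IsUniversal (F m) μ)
    (hH : IsKWiseUniform 4 H μ) (hF : iIndepFun (fun m : Finset.Icc m₀ n => F m) μ)
    (hFH : IndepFun (fun ω (m : Finset.Icc m₀ n) => F m ω) H μ)
    (X : Finset (Fin n)) (hX1 : 1 ≤ X.card) (hX2 : 2 * X.card ≤ n) (t : ℝ) :
    1 - 5 * n * (2 : ℝ) ^ (t - X.card)
      ≤ μ.real {ω | t ≤ vnEntropy (cutState X fun x => H ω (rRec n (F · ω) m₀ x))} := by
  let σ : Ω → (Fin n → Bool) → Bool := fun ω x => H ω (rRec n (F · ω) m₀ x)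
  have hR : Measurable fun ω => rRec n (F · ω) m₀ := measurable_rRec hFm
  have purity_nonneg : ∀ s, 0 ≤ purity (cutState X s) := fun s =>
    (purity_pos (posSemidef_cutState X s).isHermitian (trace_cutState X s ▸ one_ne_zero)).le
  have purity_integrable : Integrable (fun ω => purity (cutState X (σ ω))) μ :=
    Integrable.comp_measurable (g := fun s => purity (cutState X s)) .of_finite
      (measurable_apply_comp hR hHm)
  have expected_purity_le : ∫ ω, purity (cutState X (σ ω)) ∂μ ≤ 5 * n / 2 ^ X.card :=
    (integral_purity_cutState_le hR hHm (indepFun_rRec hFH) hH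
      (sum_measureReal_rRec_eq_le hFm hu hF) X).trans (two_pow_sub_add_two_pow_mul_div_le hX1 hX2)
  calc 1 - 5 * n * (2 : ℝ) ^ (t - X.card)
      = 1 - 5 * n / 2 ^ X.card / 2 ^ (-t) := by
        rw [Real.rpow_sub two_pos, Real.rpow_neg two_pos.le, Real.rpow_natCast]
        field_simp
    _ ≤ 1 - (∫ ω, purity (cutState X (σ ω)) ∂μ) / 2 ^ (-t) := by gcongr
    _ ≤ μ.real {ω | purity (cutState X (σ ω)) ≤ 2 ^ (-t)} :=
        one_sub_div_le_measureReal_le (fun _ => purity_nonneg _) purity_integrable (by positivity)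
    _ ≤ μ.real {ω | t ≤ vnEntropy (cutState X (σ ω))} :=
        measureReal_mono fun ω =>
          le_vnEntropy_of_purity_le (posSemidef_cutState X _) (trace_cutState X _)

/-- In the multi-cut construction, across any cut `X` with
`1 ≤ |X| = m ≤ n/2`, with probability at least `1 - 5 n 2^{-m/2}` the von Neumann entropy of
`ρ = T Tᵀ / 2^n` is at least `m/4`. -/
theorem statement2
    (n m₀ : ℕ) (hn : 1 ≤ n) (hm₀ : 1 ≤ m₀) (hm₀n : m₀ ≤ n)
    (Ω : Type*) [Fintype Ω] (p : Ω → ℝ)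
    (hp0 : ∀ ω, 0 ≤ p ω) (hp1 : ∑ ω, p ω = 1)
    (F : ∀ m : ℕ, Ω → (Fin m → Bool) → (Fin m → Bool))
    (Hf : Ω → (Fin n → Bool) → Bool)
    -- each `F m` (for `m₀ ≤ m ≤ n`) is a pairwise independent random function
    (hFpair : ∀ m, m₀ ≤ m → m ≤ n → ∀ x y : Fin m → Bool, x ≠ y →
      ∀ a b : Fin m → Bool,
        pr p (fun ω => F m ω x = a ∧ F m ω y = b) = ((1 : ℝ) / 2 ^ m) ^ 2)
    -- `Hf` comes from a 4-wise independent family with a uniformly random key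
    (hH4 : ∀ (s : Finset (Fin n → Bool)) (b : (Fin n → Bool) → Bool), s.card ≤ 4 →
      pr p (fun ω => ∀ u ∈ s, Hf ω u = b u) = ((1 : ℝ) / 2) ^ s.card)
    -- `F_{m₀}, …, F_n, Hf` are mutually independent
    (hInd : ∀ (g : ∀ m : ℕ, (Fin m → Bool) → (Fin m → Bool))
        (hh : (Fin n → Bool) → Bool),
      pr p (fun ω => (∀ m ∈ Finset.Icc m₀ n, F m ω = g m) ∧ Hf ω = hh)
        = (∏ m ∈ Finset.Icc m₀ n, pr p (fun ω => F m ω = g m))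
            * pr p (fun ω => Hf ω = hh))
    (X : Finset (Fin n)) (hX1 : 1 ≤ X.card) (hX2 : 2 * X.card ≤ n)
    (T : Ω → Matrix ({t : Fin n // t ∈ X} → Bool) ({t : Fin n // t ∉ X} → Bool) ℝ)
    (hT : ∀ ω i j,
      T ω i j =
        if Hf ω (rRec n (fun m => F m ω) m₀ (mergeCut X i j)) then (-1 : ℝ) else 1) :
    1 - 5 * (n : ℝ) * (2 : ℝ) ^ (-(X.card : ℝ) / 2)
      ≤ pr p (fun ω =>
          (X.card : ℝ) / 4
            ≤ vnEntropy (((1 : ℝ) / 2 ^ n) • (T ω * (T ω)ᵀ))) := by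
  let _ : MeasurableSpace Ω := ⊤
  obtain ⟨μ, _, hμ⟩ := exists_measureReal_eq_pr hp0 hp1
  simp only [hμ] at hFpair hH4 hInd ⊢
  have hFm : ∀ m ∈ Finset.Icc m₀ n, Measurable (F m) := fun _ _ => measurable_from_top
  have hHm : Measurable Hf := measurable_from_top
  obtain ⟨hF, hFH⟩ := iIndepFun_and_indepFun_of_measureReal_eq_prod_mul hFm hHm hInd
  have hu : ∀ m ∈ Finset.Icc m₀ n, IsUniversal (F m) μ := fun m hm =>
    isUniversal_of_pairwise_uniform fun x y hxy a b => by
      simpa using hFpair m (Finset.mem_Icc.1 hm).1 (Finset.mem_Icc.1 hm).2 x y hxy a b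
  have rho_eq : ∀ ω, ((1 : ℝ) / 2 ^ n) • (T ω * (T ω)ᵀ)
      = cutState X fun x => Hf ω (rRec n (F · ω) m₀ x) := fun ω => by
    have T_eq : T ω = cutMatrix X fun x => Hf ω (rRec n (F · ω) m₀ x) := Matrix.ext (hT ω)
    rw [cutState, T_eq]
  simp only [rho_eq]
  refine le_trans ?_ (statement2_general hFm hHm hu hH4 hF hFH X hX1 hX2 (X.card / 4))
  gcongr
  · exact one_le_two
  · linarith [(Nat.cast_nonneg X.card : (0 : ℝ) ≤ X.card)]
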